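/- There is a bijection between the symmetric group Sₙ (permutations of Fin n) and the set of pairs (a, f), where a is an integer with 0 ≤ a ≤ n−1 and f : {1,…,a} → {1,…,n} is an injective map satisfying: a = 0, or there exists a position p ∈ {1,…,n} with p < f(a) and p not in the image of f. Explicitly, the map sending a permutation π to the pair (m(π)−1, π⁻¹ restricted to {1, …, m(π)−1}) is such a bijection; in particular, the total number of such pairs (a, f) equals n!. -/

import Mathlib

/-- A permutation `π` of `Fin n` is a *term of `B a`* if `π⁻¹` is strictly increasing
on the last `n - a` points `{a+1, …, n}` (zero-indexed: indices `≥ a`). -/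
def isTerm (n a : ℕ) (π : Equiv.Perm (Fin n)) : Prop :=
  ∀ i j : Fin n, a ≤ (i : ℕ) → a ≤ (j : ℕ) → i < j → π⁻¹ i < π⁻¹ j

/-- `m(π)`: the smallest `m ∈ {1, …, n}` such that `π⁻¹` is strictly increasing on
`{m, m+1, …, n}`; equivalently `1` plus the smallest `c` with `π` a term of `B c`. -/
noncomputable def mval (n : ℕ) (π : Equiv.Perm (Fin n)) : ℕ :=
  1 + sInf {c : ℕ | isTerm n c π}

/-- A pair `(a, f)` with `0 ≤ a ≤ n - 1` and `f : {1,…,a} → {1,…,n}` injective, such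
that `a = 0` or there is a position `p` outside the image of `f` with `p < f(a)`. -/
structure InjPair (n : ℕ) where
  /-- the number of cards removed -/
  a : ℕ
  ha : a ≤ n - 1
  /-- the positions to which the removed cards `1, …, a` are sent -/
  f : Fin a → Fin n
  hf : Function.Injective f
  cond : a = 0 ∨ ∃ p : Fin n, (∀ i, f i ≠ p) ∧ ∃ h : a - 1 < a, p < f ⟨a - 1, h⟩

theorem isTerm_last (n : ℕ) (π : Equiv.Perm (Fin n)) : isTerm n (n - 1) π := by
  intro i j hi hj hij
  have := i.isLt
  have := j.isLt
  have : (i : ℕ) < j := hij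
  omega

theorem isTerm_sInf (n : ℕ) (π : Equiv.Perm (Fin n)) :
    isTerm n (sInf {c : ℕ | isTerm n c π}) π :=
  Nat.sInf_mem (s := {c : ℕ | isTerm n c π}) ⟨n - 1, isTerm_last n π⟩

theorem sInf_le_last (n : ℕ) (π : Equiv.Perm (Fin n)) :
    sInf {c : ℕ | isTerm n c π} ≤ n - 1 :=
  Nat.sInf_le (isTerm_last n π)

/-- The forward map. -/
noncomputable def toPair (n : ℕ) (hn : 1 ≤ n) (π : Equiv.Perm (Fin n)) : InjPair n where
  a := sInf {c : ℕ | isTerm n c π}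
  ha := sInf_le_last n π
  f := fun i => π⁻¹ ⟨(i : ℕ), by
    have h1 := i.isLt
    have h2 := sInf_le_last n π
    omega⟩
  hf := by
    intro i j h
    have := π⁻¹.injective h
    simp only [Fin.mk.injEq] at this
    exact Fin.ext this
  cond := by
    by_cases h0 : sInf {c : ℕ | isTerm n c π} = 0
    · exact Or.inl h0
    right
    have h2 := sInf_le_last n π
    have ht := isTerm_sInf n π
    have hnot : ¬ isTerm n (sInf {c : ℕ | isTerm n c π} - 1) π := by
      intro h
      have := Nat.sInf_le (s := {c : ℕ | isTerm n c π}) h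
      omega
    set c := sInf {c : ℕ | isTerm n c π} with hc
    unfold isTerm at hnot
    push Not at hnot
    obtain ⟨i, j, hi, hj, hij, hle⟩ := hnot
    have hij' : (i : ℕ) < j := hij
    have hic : (i : ℕ) = c - 1 := by
      by_contra hne
      exact absurd (ht i j (by omega) (by omega) hij) (not_lt.mpr hle)
    refine ⟨π⁻¹ j, ?_, by omega, ?_⟩
    · intro k hk
      have := congrArg Fin.val (π⁻¹.injective hk)
      have := k.isLt
      simp only at *
      omega
    · have hi' : (⟨c - 1, by omega⟩ : Fin n) = i := Fin.ext hic.symm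
      change π⁻¹ j < π⁻¹ (⟨c - 1, by omega⟩ : Fin n)
      rw [hi']
      refine lt_of_le_of_ne hle ?_
      intro h
      have := π⁻¹.injective h
      omega

theorem injPair_ext {n : ℕ} (P Q : InjPair n) (h : P.a = Q.a)
    (hf : ∀ i (h1 : i < P.a) (h2 : i < Q.a), P.f ⟨i, h1⟩ = Q.f ⟨i, h2⟩) : P = Q := by
  obtain ⟨a, ha, f, hf1, c1⟩ := P
  obtain ⟨b, hb, g, hg1, c2⟩ := Q
  simp only at h
  subst h
  have : f = g := by
    funext i
    exact hf i i.isLt i.isLt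
  subst this
  rfl

theorem toPair_inj (n : ℕ) (hn : 1 ≤ n) : Function.Injective (toPair n hn) := by
  intro π σ h
  have ha : (toPair n hn π).a = (toPair n hn σ).a := by rw [h]
  have hf : ∀ i (h1 : i < (toPair n hn π).a) (h2 : i < (toPair n hn σ).a),
      (toPair n hn π).f ⟨i, h1⟩ = (toPair n hn σ).f ⟨i, h2⟩ := by
    rw [h]; intros; rfl
  have tπ := isTerm_sInf n π
  have tσ := isTerm_sInf n σ
  have hlt : ∀ i : Fin n, (i : ℕ) < sInf {c : ℕ | isTerm n c π} → π⁻¹ i = σ⁻¹ i := by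
    intro i hi
    have hi2 : (i : ℕ) < sInf {c : ℕ | isTerm n c σ} := lt_of_lt_of_eq hi ha
    exact hf i hi hi2
  have ha' : sInf {c : ℕ | isTerm n c π} = sInf {c : ℕ | isTerm n c σ} := ha
  rw [← ha'] at tσ
  generalize sInf {c : ℕ | isTerm n c π} = c at *
  have key : ∀ (α β : Equiv.Perm (Fin n)), isTerm n c β → ∀ k : Fin n, c ≤ (k : ℕ) →
      (∀ j < k, α⁻¹ j = β⁻¹ j) → ¬ α⁻¹ k < β⁻¹ k := by
    intro α β tβ k hk ih hlt
    obtain ⟨j, hj⟩ := β⁻¹.surjective (α⁻¹ k)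
    rcases lt_trichotomy j k with hjk | hjk | hjk
    · rw [← ih j hjk] at hj
      exact hjk.ne (α⁻¹.injective hj)
    · subst hjk
      exact hlt.ne hj.symm
    · have hjk' : (k : ℕ) < j := hjk
      have := tβ k j hk (by omega) hjk
      rw [hj] at this
      exact lt_asymm this hlt
  have main : ∀ k : Fin n, π⁻¹ k = σ⁻¹ k := by
    intro k
    induction k using WellFoundedLT.induction with
    | ind k ih =>
      by_cases hk : (k : ℕ) < c
      · exact hlt k hk
      · push Not at hk
        exact le_antisymm
          (not_lt.mp (key σ π tπ k hk (fun j hj => (ih j hj).symm)))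
          (not_lt.mp (key π σ tσ k hk ih))
  exact inv_injective (Equiv.ext main)

theorem toPair_surj (n : ℕ) (hn : 1 ≤ n) : Function.Surjective (toPair n hn) := by
  rintro ⟨a, ha, f, hf, cond⟩
  classical
  have hcard : ((Finset.univ.image f)ᶜ).card = n - a := by
    rw [Finset.card_compl, Finset.card_image_of_injective _ hf]
    simp
  let emb := ((Finset.univ.image f)ᶜ).orderEmbOfFin hcard
  have hemb : ∀ x i, f i ≠ emb x := by
    intro x i h
    have := ((Finset.univ.image f)ᶜ).orderEmbOfFin_mem hcard x
    rw [Finset.mem_compl] at this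
    exact this (Finset.mem_image.mpr ⟨i, Finset.mem_univ _, h⟩)
  let g : Fin n → Fin n := fun i =>
    if h : (i : ℕ) < a then f ⟨i, h⟩ else emb ⟨i - a, by have := i.isLt; omega⟩
  have g1 : ∀ (i : Fin n) (h : (i : ℕ) < a), g i = f ⟨i, h⟩ := fun i h => dif_pos h
  have g2 : ∀ (i : Fin n) (h : ¬ (i : ℕ) < a),
      g i = emb ⟨i - a, by have := i.isLt; omega⟩ := fun i h => dif_neg h
  have ginj : Function.Injective g := by
    intro i j hij
    by_cases hi : (i : ℕ) < a <;> by_cases hj : (j : ℕ) < a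
    · rw [g1 i hi, g1 j hj] at hij
      have := congrArg Fin.val (hf hij)
      exact Fin.ext this
    · rw [g1 i hi, g2 j hj] at hij
      exact absurd hij (hemb _ _)
    · rw [g2 i hi, g1 j hj] at hij
      exact absurd hij.symm (hemb _ _)
    · rw [g2 i hi, g2 j hj] at hij
      have := congrArg Fin.val (emb.injective hij)
      simp only at this
      exact Fin.ext (by omega)
  let ρ : Equiv.Perm (Fin n) := Equiv.ofBijective g (Finite.injective_iff_bijective.mp ginj)
  have hρ : ∀ i, (ρ⁻¹)⁻¹ i = g i := by
    intro i
    rw [inv_inv]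
    rfl
  have hterm : isTerm n a ρ⁻¹ := by
    intro i j hi hj hij
    rw [hρ, hρ, g2 i (by omega), g2 j (by omega)]
    apply emb.strictMono
    have : (i : ℕ) < j := hij
    rw [Fin.mk_lt_mk]
    omega
  have hs : sInf {c : ℕ | isTerm n c ρ⁻¹} = a := by
    apply le_antisymm (Nat.sInf_le hterm)
    by_contra hlt
    have ht := isTerm_sInf n ρ⁻¹
    rcases cond with h0 | ⟨p, hp, h, hpf⟩
    · omega
    obtain ⟨j, hj⟩ := (Finite.injective_iff_bijective.mp ginj).2 p
    have hja : ¬ (j : ℕ) < a := by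
      intro hja
      rw [g1 j hja] at hj
      exact hp _ hj
    have := ht ⟨a - 1, by omega⟩ j (by simp only; omega) (by omega)
      (by rw [Fin.lt_def]; simp only; omega)
    rw [hρ, hρ, hj, g1 _ h] at this
    exact lt_asymm this hpf
  refine ⟨ρ⁻¹, injPair_ext _ _ hs ?_⟩
  intro i h1 h2
  exact (hρ _).trans (g1 _ h2)

/-- The map is a bijection; there are n! pairs. -/
theorem perm_equiv_injPair (n : ℕ) (hn : 1 ≤ n) :
    (∃ e : Equiv.Perm (Fin n) ≃ InjPair n,
      ∀ π : Equiv.Perm (Fin n),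
        (e π).a = mval n π - 1 ∧
        ∀ i : Fin ((e π).a),
          (e π).f i = π⁻¹ ⟨(i : ℕ), by
            have h1 := i.isLt
            have h2 := (e π).ha
            omega⟩) ∧
    Nat.card (InjPair n) = Nat.factorial n := by
  have hb : Function.Bijective (toPair n hn) := ⟨toPair_inj n hn, toPair_surj n hn⟩
  refine ⟨⟨Equiv.ofBijective (toPair n hn) hb, ?_⟩, ?_⟩
  · intro π
    refine ⟨?_, fun i => rfl⟩
    change sInf {c : ℕ | isTerm n c π} = 1 + sInf {c : ℕ | isTerm n c π} - 1
    omega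
  · rw [← Nat.card_congr (Equiv.ofBijective (toPair n hn) hb), Nat.card_perm, Nat.card_fin]
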